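/- Let F be a finite field, let R >= 1 and X_Delta >= 1 be natural numbers, let a_1, ..., a_{X_Delta} be pairwise distinct elements of F, and let f_1, ..., f_R be elements of F with f_j != a_n for all j, n. Let the random scalars z_1, ..., z_{X_Delta} be independent and uniformly distributed on F. Then for every choice of increment symbols Delta_1, ..., Delta_R in F, the joint distribution of the tuple ( sum_{j=1}^{R} Delta_j / (a_n - f_j) + sum_{x=1}^{X_Delta} a_n^{x-1} z_x )_{n in [X_Delta]} is the uniform distribution on F^{X_Delta}. In particular, this joint distribution does not depend on Delta_1, ..., Delta_R. -/

import Mathlib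

/-!
The noise enters the observed tuple through the square Vandermonde matrix of the evaluation points.
Its determinant is a product of differences of distinct points, so the matrix is invertible. For
fixed increments the tuple is therefore a bijective affine image of the noise vector, and a
bijection of finite types carries the uniform distribution to the uniform distribution.
-/

open Matrix

theorem map_uniformOfFintype_of_bijective {α β : Type*} [Fintype α] [Nonempty α] [Fintype β]
    [Nonempty β] {g : α → β} (hg : Function.Bijective g) :
    (PMF.uniformOfFintype α).map g = PMF.uniformOfFintype β := by
  classical
  ext b
  obtain ⟨a, rfl⟩ := hg.surjective b
  simp only [PMF.map_apply, PMF.uniformOfFintype_apply, hg.injective.eq_iff, tsum_ite_eq',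
    Fintype.card_of_bijective hg]

theorem map_add_mulVec_uniformOfFintype {ι A : Type*} [Fintype ι] [DecidableEq ι] [Ring A]
    [Fintype A] {M : Matrix ι ι A} (hM : IsUnit M) (c : ι → A) :
    (PMF.uniformOfFintype (ι → A)).map (fun z ↦ c + M *ᵥ z) = PMF.uniformOfFintype (ι → A) := by
  have h_inj : Function.Injective fun z ↦ c + M *ᵥ z :=
    (add_right_injective c).comp (mulVec_injective_of_isUnit hM)
  exact map_uniformOfFintype_of_bijective (Finite.injective_iff_bijective.mp h_inj)

theorem isUnit_vandermonde_iff {A : Type*} [CommRing A] {n : ℕ} {v : Fin n → A} :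
    IsUnit (vandermonde v) ↔ Pairwise fun i j ↦ IsUnit (v i - v j) := by
  simp only [isUnit_iff_isUnit_det, det_vandermonde, IsUnit.prod_iff, Finset.mem_univ,
    Finset.mem_Ioi, forall_const]
  constructor
  · intro h i j hij
    rcases hij.lt_or_gt with hlt | hgt
    · exact IsUnit.sub_iff.mp (h i j hlt)
    · exact h j i hgt
  · exact fun h i j hij ↦ h hij.ne'

/-- The offset `c` stands for the Cauchy part `∑ j, Δ j / (a n - f j)` of the increment symbols. -/
theorem acsa_increment_XDelta_security_general {A : Type*} [CommRing A] [Fintype A] {X : ℕ}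
    {a : Fin X → A} (ha : Pairwise fun m n ↦ IsUnit (a m - a n)) (c : Fin X → A) :
    (PMF.uniformOfFintype (Fin X → A)).map (fun z n ↦ c n + ∑ x : Fin X, a n ^ (x : ℕ) * z x) =
      PMF.uniformOfFintype (Fin X → A) :=
  map_add_mulVec_uniformOfFintype (isUnit_vandermonde_iff.mpr ha) c

/-- X_Δ-security of ACSA increments: with `z 1, …, z X_Δ` independent uniform random
scalars on `F` (modeled as a single uniform random variable on the product), the tuple
of increment symbols `∑ j, Δ j / (a n - f j) + ∑ x, (a n)^(x-1) * z x` observed by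
`X_Δ` colluding servers with pairwise distinct evaluation points `a 1, …, a X_Δ` is
uniformly distributed on `F^(X_Δ)`; in particular its distribution does not depend on
the increments `Δ j`. -/
theorem acsa_increment_XDelta_security
    {F : Type*} [Field F] [Fintype F] [DecidableEq F]
    (R XD : ℕ) (hR : 1 ≤ R) (hXD : 1 ≤ XD)
    (a : Fin XD → F) (ha : Function.Injective a)
    (f : Fin R → F) (hfa : ∀ (j : Fin R) (n : Fin XD), f j ≠ a n)
    (Delta : Fin R → F) :
    PMF.map
      (fun (z : Fin XD → F) (n : Fin XD) =>
        (∑ j : Fin R, Delta j / (a n - f j)) + ∑ x : Fin XD, (a n) ^ (x : ℕ) * z x)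
      (PMF.uniformOfFintype (Fin XD → F))
    = PMF.uniformOfFintype (Fin XD → F) :=
  acsa_increment_XDelta_security_general
    (fun _ _ hmn ↦ isUnit_iff_ne_zero.mpr (sub_ne_zero.mpr (ha.ne hmn))) _
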